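/- arXiv:2006.13034 — 2 statements merged into one kernel-verified Lean document; each statement's English description precedes it below -/
import Mathlib

section
/- The map Q : M → S ⊗_R M is a homomorphism of S-modules; that is, Q is R-linear and satisfies Q(x·m) = x·Q(m) for every m ∈ M (where x acts on S ⊗_R M through the left tensor factor). -/
/-!
Setup: `R` a commutative ring, `r ≥ 1`, `a₁, …, a_r ∈ R` with `a 0 = 1`,
`P(X) = ∑_{j=0}^{r} a_j X^{r-j} = X^r + a₁ X^{r-1} + ⋯ + a_r`,
`S = R[X]/(P)` with `x` the class of `X`, and `M` an `S`-module.
`S ⊗[R] M` is an `S`-module via the left tensor factor.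
-/

open Polynomial TensorProduct

noncomputable section

variable (R : Type*) [CommRing R] (r : ℕ) (a : ℕ → R)

/-- The polynomial `P(X) = ∑_{j=0}^{r} a_j X^{r-j}`; when `a 0 = 1` this is
`X^r + a₁ X^{r-1} + ⋯ + a_{r-1} X + a_r`. -/
def specPoly : Polynomial R := ∑ j ∈ Finset.range (r + 1), Polynomial.C (a j) * Polynomial.X ^ (r - j)

/-- `S = R[X]/(P)`. -/
abbrev SpecS := AdjoinRoot (specPoly R r a)

/-- `x ∈ S`, the class of `X`. -/
def specX : SpecS R r a := AdjoinRoot.root _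

variable (M : Type*) [AddCommGroup M] [Module R M] [Module (SpecS R r a) M]
  [IsScalarTower R (SpecS R r a) M]

/-- `ev : S ⊗_R M → M`, `p ⊗ m ↦ p • m`. -/
def specEv : SpecS R r a ⊗[R] M →ₗ[SpecS R r a] M :=
  LinearMap.liftBaseChange _ LinearMap.id

/-- `Ψ : S ⊗_R M → S ⊗_R M`, `q ⊗ m ↦ q ⊗ (x • m) − (x * q) ⊗ m`. -/
def specPsi : SpecS R r a ⊗[R] M →ₗ[SpecS R r a] SpecS R r a ⊗[R] M :=
  LinearMap.baseChange (SpecS R r a)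
      ((LinearMap.lsmul (SpecS R r a) M (specX R r a)).restrictScalars R)
    - LinearMap.lsmul (SpecS R r a) (SpecS R r a ⊗[R] M) (specX R r a)

/-- `Q : M → S ⊗_R M`,
`Q(m) = ∑_{i=0}^{r−1} x^i ⊗ ( ∑_{j=0}^{r−1−i} a_j x^{r−1−i−j} ) • m`. -/
def specQ (m : M) : SpecS R r a ⊗[R] M :=
  ∑ i ∈ Finset.range r,
    ((specX R r a) ^ i) ⊗ₜ[R]
      ((∑ j ∈ Finset.range (r - i),
          algebraMap R (SpecS R r a) (a j) * (specX R r a) ^ (r - 1 - i - j)) • m)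

/-! The element `q = (P(X) - P(Y)) / (X - Y)`, evaluated at `X = x ⊗ 1` and `Y = 1 ⊗ x` in `S ⊗[R] S`,
satisfies `(x ⊗ 1 - 1 ⊗ x) * q = P(x) ⊗ 1 - 1 ⊗ P(x) = 0`. Every `s : S` is a polynomial in `x`, so
`x ⊗ 1 - 1 ⊗ x` divides `s ⊗ 1 - 1 ⊗ s`, and therefore `(s ⊗ 1) * q = (1 ⊗ s) * q`. Since `Q(m)` is
the result of applying `p ⊗ p' ↦ p ⊗ p' • m` to `q`, this identity says that `Q` is `S`-linear. -/

section DividedDifference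

variable {R r a} {A : Type*} [Ring A] [Algebra R A]

/-- The divided difference of `p` at `u` and `v`, that is `(p(u) - p(v)) / (u - v)` for commuting
`u` and `v`. It is given by its values on powers of `X`, so that it makes sense when `u - v` is not
invertible. -/
def dividedDifference (u v : A) : R[X] →ₗ[R] A :=
  Polynomial.lsum fun n ↦
    LinearMap.toSpanSingleton R A (∑ i ∈ Finset.range n, u ^ i * v ^ (n - 1 - i))

theorem dividedDifference_monomial (u v : A) (n : ℕ) (c : R) :
    dividedDifference u v (monomial n c) =
      c • ∑ i ∈ Finset.range n, u ^ i * v ^ (n - 1 - i) := by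
  simp [dividedDifference, Polynomial.lsum_apply]

theorem sub_mul_dividedDifference {u v : A} (h : Commute u v) (p : R[X]) :
    (u - v) * dividedDifference u v p = aeval u p - aeval v p := by
  induction p using Polynomial.induction_on' with
  | add p q hp hq => rw [map_add, mul_add, hp, hq, map_add, map_add, add_sub_add_comm]
  | monomial n c =>
    rw [dividedDifference_monomial, mul_smul_comm, h.mul_geom_sum₂, aeval_monomial, aeval_monomial,
      ← Algebra.smul_def, ← Algebra.smul_def, smul_sub]

theorem dividedDifference_specPoly (u v : A) :
    dividedDifference u v (specPoly R r a) =
      ∑ i ∈ Finset.range r,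
        u ^ i * ∑ j ∈ Finset.range (r - i), algebraMap R A (a j) * v ^ (r - 1 - i - j) := by
  simp only [specPoly, map_sum, C_mul_X_pow_eq_monomial, dividedDifference_monomial,
    Finset.smul_sum, Finset.mul_sum]
  rw [Finset.sum_comm' (t' := Finset.range r) (s' := fun i ↦ Finset.range (r - i))
    (by simp only [Finset.mem_range]; omega)]
  refine Finset.sum_congr rfl fun i _ ↦ Finset.sum_congr rfl fun j _ ↦ ?_
  rw [← Algebra.smul_def, mul_smul_comm, show r - j - 1 - i = r - 1 - i - j by omega]

end DividedDifference

section TensorSquare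

variable {R r a} {S : Type*} [CommRing S] [Algebra R S]

/-- The Bezoutian `(p(X) - p(Y)) / (X - Y)` of `p` and `1`, evaluated at `X = x ⊗ 1` and
`Y = 1 ⊗ x`. If `x` is a root of `p` that generates `S`, it is a Casimir element of `S ⊗[R] S`:
left and right multiplication by elements of `S` agree on it. -/
def bezoutian (p : R[X]) (x : S) : S ⊗[R] S :=
  dividedDifference (x ⊗ₜ 1) (1 ⊗ₜ x) p

theorem sub_mul_bezoutian (f : R[X]) (x : S) :
    (x ⊗ₜ[R] 1 - 1 ⊗ₜ x : S ⊗[R] S) * bezoutian f x = aeval x f ⊗ₜ 1 - 1 ⊗ₜ aeval x f := by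
  have hleft := aeval_algHom_apply (Algebra.TensorProduct.includeLeft : S →ₐ[R] S ⊗[R] S) x f
  have hright := aeval_algHom_apply (Algebra.TensorProduct.includeRight : S →ₐ[R] S ⊗[R] S) x f
  rw [bezoutian, sub_mul_dividedDifference (Commute.all _ _)]
  exact congrArg₂ (· - ·) hleft hright

theorem smul_bezoutian_eq_one_tmul_mul {p : R[X]} {x : S} (hp : aeval x p = 0) {s : S}
    (hs : s ∈ Algebra.adjoin R {x}) : s • bezoutian p x = (1 ⊗ₜ s) * bezoutian p x := by
  obtain ⟨f, rfl⟩ : ∃ f : R[X], aeval x f = s := by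
    rwa [Algebra.adjoin_singleton_eq_range_aeval] at hs
  have hx : (x ⊗ₜ[R] 1 - 1 ⊗ₜ x : S ⊗[R] S) * bezoutian p x = 0 := by
    rw [sub_mul_bezoutian, hp, zero_tmul, tmul_zero, sub_zero]
  rw [Algebra.smul_def, Algebra.TensorProduct.algebraMap_apply, Algebra.algebraMap_self_apply,
    ← sub_eq_zero, ← sub_mul, ← sub_mul_bezoutian, mul_right_comm, hx, zero_mul]

theorem bezoutian_specPoly (x : S) :
    bezoutian (specPoly R r a) x =
      ∑ i ∈ Finset.range r, (x ^ i) ⊗ₜ[R]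
        ∑ j ∈ Finset.range (r - i), algebraMap R S (a j) * x ^ (r - 1 - i - j) := by
  rw [bezoutian, dividedDifference_specPoly]
  refine Finset.sum_congr rfl fun i _ ↦ ?_
  simp only [← Algebra.smul_def, Algebra.TensorProduct.tmul_pow, one_pow, ← tmul_smul, ← tmul_sum,
    Algebra.TensorProduct.tmul_mul_tmul, mul_one, one_mul]

variable {N : Type*} [AddCommGroup N] [Module R N] [Module S N] [IsScalarTower R S N]

/-- The pairing of `S ⊗[R] S` with `N` given by `(p ⊗ q, m) ↦ p ⊗ (q • m)`, linear over `S` in its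
first argument through the left factor. The map `Q` is its value at `bezoutian P x`. -/
def tensorAct : S ⊗[R] S →ₗ[S] N →ₗ[R] S ⊗[R] N :=
  LinearMap.liftBaseChange S
    (LinearMap.compRight R (TensorProduct.mk R S N 1) ∘ₗ (Algebra.lsmul R R N).toLinearMap)

theorem tensorAct_tmul (p q : S) (m : N) : tensorAct (p ⊗ₜ[R] q) m = p ⊗ₜ (q • m) := by
  simp [tensorAct, smul_tmul']

theorem tensorAct_one_tmul_mul (s : S) (c : S ⊗[R] S) (m : N) :
    tensorAct ((1 ⊗ₜ s) * c) m = tensorAct c (s • m) := by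
  induction c with
  | zero => simp
  | add c d hc hd => simp only [mul_add, map_add, LinearMap.add_apply, hc, hd]
  | tmul p q =>
    rw [Algebra.TensorProduct.tmul_mul_tmul, one_mul, tensorAct_tmul, tensorAct_tmul, mul_comm,
      mul_smul]

theorem isLinearMap_tensorAct {c : S ⊗[R] S} (hc : ∀ s : S, s • c = (1 ⊗ₜ s) * c) :
    IsLinearMap S (tensorAct (N := N) c) where
  map_add := map_add _
  map_smul s m := by rw [← tensorAct_one_tmul_mul, ← hc, map_smul, LinearMap.smul_apply]

theorem statement_1_general {x : S} (hroot : aeval x (specPoly R r a) = 0)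
    (hgen : Algebra.adjoin R {x} = ⊤) :
    IsLinearMap S fun m : N ↦
      ∑ i ∈ Finset.range r, (x ^ i) ⊗ₜ[R]
        ((∑ j ∈ Finset.range (r - i), algebraMap R S (a j) * x ^ (r - 1 - i - j)) • m) := by
  have hQ (m : N) : tensorAct (bezoutian (specPoly R r a) x) m =
      ∑ i ∈ Finset.range r, (x ^ i) ⊗ₜ[R]
        ((∑ j ∈ Finset.range (r - i), algebraMap R S (a j) * x ^ (r - 1 - i - j)) • m) := by
    simp only [bezoutian_specPoly, map_sum, LinearMap.sum_apply, tensorAct_tmul]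
  simp only [← hQ]
  exact isLinearMap_tensorAct fun s ↦ smul_bezoutian_eq_one_tmul_mul hroot (hgen ▸ Algebra.mem_top)

end TensorSquare

/-- `Q : M → S ⊗_R M` is a homomorphism of `S`-modules; that is, `Q` is `R`-linear
(additive and commuting with `R`-scalars) and satisfies `Q(x • m) = x • Q(m)` for every `m`. -/
theorem statement_1 (hr : 1 ≤ r) (ha : a 0 = 1) :
    IsLinearMap (SpecS R r a) (specQ R r a M) ∧
    (∀ m m' : M, specQ R r a M (m + m') = specQ R r a M m + specQ R r a M m') ∧
    (∀ (c : R) (m : M), specQ R r a M (c • m) = c • specQ R r a M m) ∧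
    (∀ m : M, specQ R r a M (specX R r a • m) = specX R r a • specQ R r a M m) := by
  have hQ : IsLinearMap (SpecS R r a) (specQ R r a M) :=
    statement_1_general ((AdjoinRoot.aeval_eq _).trans AdjoinRoot.mk_self)
      AdjoinRoot.adjoinRoot_eq_top
  exact ⟨hQ, hQ.map_add, (hQ.mk' _).map_smul_of_tower, hQ.map_smul _⟩
end
end

section
/- The kernel of Ψ equals the image of Q; more precisely, if z = Σ_{i=0}^{r−1} x^i ⊗ m_i ∈ S ⊗_R M satisfies Ψ(z) = 0, then, setting m = m_{r−1}, one has m_i = ( Σ_{j=0}^{r−1−i} a_j·x^{r−1−i−j} )·m for every i = 0, …, r−1, and hence z = Q(m). -/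
/-!
Setup: `R` a commutative ring, `r ≥ 1`, `a₁, …, a_r ∈ R` with `a 0 = 1`,
`P(X) = ∑_{j=0}^{r} a_j X^{r-j} = X^r + a₁ X^{r-1} + ⋯ + a_r`,
`S = R[X]/(P)` with `x` the class of `X`, and `M` an `S`-module.
`S ⊗[R] M` is an `S`-module via the left tensor factor.
-/

open Polynomial TensorProduct

noncomputable section

variable (R : Type*) [CommRing R] (r : ℕ) (a : ℕ → R)

variable (M : Type*) [AddCommGroup M] [Module R M] [Module (SpecS R r a) M]
  [IsScalarTower R (SpecS R r a) M]

/-!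
The truncations `h_k = ∑_{j ≤ k} a_j X^{k-j}` of `P` are the partial results of Horner's scheme:
`h_0 = 1`, `h_{k+1} = X h_k + a_{k+1}`, and `h_r = P`. So `h_k` is `specPoly R k a`, and
`Q(m) = ∑_{k < r} x^{r-1-k} ⊗ h_k(x) m` is the divided difference `(P(X) - P(Y)) / (X - Y)`,
with `X` acting on the left factor and `Y` on `m`.

Write `z = ∑_{k < r} x^{r-1-k} ⊗ n_k` with `n_r = 0`. Reducing `x^r` modulo `P`, the coefficient of
`Ψ(z)` at `x^{r-1-k}` is `x n_k + a_{k+1} n_0 - n_{k+1}`. These vanish exactly when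
`n_k = h_k(x) n_0` for `k ≤ r`, where the case `k = r` reads `0 = P(x) n_0` and is automatic.
-/

section BasisTensor

variable {R r} {A N : Type*} [AddCommMonoid A] [Module R A] [AddCommMonoid N] [Module R N]
  {e : ℕ → A} (b : Module.Basis (Fin r) R A) (hb : ∀ i, b i = e i)

include b hb

theorem sum_range_basis_tmul_eq_zero_iff (n : ℕ → N) :
    ∑ i ∈ Finset.range r, e i ⊗ₜ[R] n i = 0 ↔ ∀ i < r, n i = 0 := by
  refine ⟨fun h i hi => ?_, fun h => Finset.sum_eq_zero fun i hi => ?_⟩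
  · have coeff_eq_zero := TensorProduct.sum_tmul_basis_left_eq_zero b
      (Finsupp.equivFunOnFinite.symm fun i : Fin r => n i)
      (by simpa [Finsupp.sum_fintype, hb, Finset.sum_range] using h)
    simpa using DFunLike.congr_fun coeff_eq_zero ⟨i, hi⟩
  · rw [h i (Finset.mem_range.1 hi), tmul_zero]

theorem exists_eq_sum_range_basis_tmul (z : A ⊗[R] N) :
    ∃ n : ℕ → N, z = ∑ i ∈ Finset.range r, e i ⊗ₜ[R] n i := by
  obtain ⟨c, rfl⟩ := TensorProduct.eq_repr_basis_left b z
  refine ⟨fun i => if h : i < r then c ⟨i, h⟩ else 0, ?_⟩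
  simp [Finsupp.sum_fintype, Finset.sum_range, hb]

end BasisTensor

section HornerScheme

variable {R a}

theorem specPoly_zero (ha : a 0 = 1) : specPoly R 0 a = 1 := by
  simp [specPoly, ha]

variable (a) in
theorem specPoly_succ (k : ℕ) : specPoly R (k + 1) a = X * specPoly R k a + C (a (k + 1)) := by
  rw [specPoly, Finset.sum_range_succ, specPoly, Finset.mul_sum, Nat.sub_self, pow_zero, mul_one]
  congr 1
  refine Finset.sum_congr rfl fun j hj => ?_
  rw [Nat.succ_sub (Finset.mem_range_succ_iff.1 hj), pow_succ']
  ring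

theorem isMonicOfDegree_specPoly [Nontrivial R] (ha : a 0 = 1) (k : ℕ) :
    IsMonicOfDegree (specPoly R k a) k := by
  induction k with
  | zero => exact isMonicOfDegree_zero_iff.2 (specPoly_zero ha)
  | succ k ih =>
    rw [specPoly_succ, add_comm k 1]
    exact ((isMonicOfDegree_X R).mul ih).add_right (by simp)

variable {A N : Type*} [Semiring A] [Algebra R A]

variable (a) in
theorem aeval_specPoly (x : A) (k : ℕ) :
    aeval x (specPoly R k a) =
      ∑ j ∈ Finset.range (k + 1), algebraMap R A (a j) * x ^ (k - j) := by
  simp [specPoly]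

variable [AddCommMonoid N] [Module R N] [Module A N] [IsScalarTower R A N]

variable (a) in
theorem aeval_specPoly_succ_smul (x : A) (k : ℕ) (m : N) :
    aeval x (specPoly R (k + 1) a) • m =
      x • aeval x (specPoly R k a) • m + a (k + 1) • m := by
  simp [specPoly_succ, add_smul, mul_smul]

theorem horner_recurrence_iff (ha : a 0 = 1) (x : A) (n : ℕ → N) (K : ℕ) :
    (∀ k < K, n (k + 1) = x • n k + a (k + 1) • n 0) ↔
      ∀ k ≤ K, n k = aeval x (specPoly R k a) • n 0 := by
  refine ⟨fun h k hk => ?_, fun h k hk => ?_⟩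
  · induction k with
    | zero => rw [specPoly_zero ha, map_one, one_smul]
    | succ k ih => rw [h k hk, aeval_specPoly_succ_smul, ← ih (Nat.le_of_succ_le hk)]
  · rw [h (k + 1) hk, aeval_specPoly_succ_smul, ← h k hk.le]

end HornerScheme

section PowerBasis

variable {R r a}

variable (R r a) in
theorem aeval_specX_specPoly : aeval (specX R r a) (specPoly R r a) = 0 := by
  rw [specX, AdjoinRoot.aeval_eq, AdjoinRoot.mk_self]

theorem specX_pow_eq_neg_sum (ha : a 0 = 1) :
    specX R r a ^ r = -∑ k ∈ Finset.range r, a (k + 1) • specX R r a ^ (r - 1 - k) := by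
  have h := aeval_specX_specPoly R r a
  rw [aeval_specPoly, Finset.sum_range_succ', ha, map_one, one_mul, Nat.sub_zero] at h
  simpa only [Algebra.smul_def, Nat.sub_sub, add_comm 1] using eq_neg_of_add_eq_zero_right h

theorem exists_basis_eq_specX_pow (ha : a 0 = 1) :
    ∃ b : Module.Basis (Fin r) R (SpecS R r a), ∀ i, b i = specX R r a ^ (i : ℕ) := by
  rcases subsingleton_or_nontrivial R with _ | _
  · have := Module.subsingleton R (SpecS R r a)
    exact ⟨.ofRepr 0, fun _ => Subsingleton.elim _ _⟩
  · have hP := isMonicOfDegree_specPoly ha r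
    let pb := AdjoinRoot.powerBasis' hP.monic
    have dim_eq : pb.dim = r := hP.natDegree_eq
    exact ⟨pb.basis.reindex (finCongr dim_eq), fun i => by simp [pb, specX]⟩

end PowerBasis

section Kernel

variable {R r a M}

theorem specPsi_tmul (q : SpecS R r a) (m : M) :
    specPsi R r a M (q ⊗ₜ m) = q ⊗ₜ (specX R r a • m) - (specX R r a * q) ⊗ₜ m := by
  simp [specPsi, TensorProduct.smul_tmul']

theorem specPsi_sum_pow_rev_tmul (ha : a 0 = 1) {n : ℕ → M} (hn : n r = 0) :
    specPsi R r a M (∑ k ∈ Finset.range r, (specX R r a ^ (r - 1 - k)) ⊗ₜ[R] n k) =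
      ∑ k ∈ Finset.range r, (specX R r a ^ (r - 1 - k)) ⊗ₜ[R]
        (specX R r a • n k + a (k + 1) • n 0 - n (k + 1)) := by
  set x := specX R r a
  have shift : ∑ k ∈ Finset.range r, (x * x ^ (r - 1 - k)) ⊗ₜ[R] n k =
      ∑ k ∈ Finset.range r, (x ^ (r - 1 - k)) ⊗ₜ[R] n (k + 1) + (x ^ r) ⊗ₜ[R] n 0 := by
    have h := (Finset.sum_range_succ (fun k => (x ^ (r - k)) ⊗ₜ[R] n k) r).symm.trans
      (Finset.sum_range_succ' _ r)
    rw [hn, tmul_zero, add_zero, Nat.sub_zero] at h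
    simp only [Nat.sub_sub, add_comm 1]
    rw [← h]
    refine Finset.sum_congr rfl fun k hk => ?_
    rw [← pow_succ', ← Nat.sub_sub, Nat.sub_add_cancel (Nat.sub_pos_of_lt (Finset.mem_range.1 hk))]
  have reduce : (x ^ r) ⊗ₜ[R] n 0 =
      -∑ k ∈ Finset.range r, (x ^ (r - 1 - k)) ⊗ₜ[R] (a (k + 1) • n 0) := by
    simp only [x, specX_pow_eq_neg_sum ha, neg_tmul, sum_tmul, smul_tmul]
  simp only [map_sum, specPsi_tmul, tmul_sub, tmul_add, Finset.sum_sub_distrib,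
    Finset.sum_add_distrib]
  rw [shift, reduce]
  abel

theorem specPsi_sum_pow_rev_tmul_eq_zero_iff (ha : a 0 = 1) {n : ℕ → M} (hn : n r = 0) :
    specPsi R r a M (∑ k ∈ Finset.range r, (specX R r a ^ (r - 1 - k)) ⊗ₜ[R] n k) = 0 ↔
      ∀ k < r, n k = aeval (specX R r a) (specPoly R k a) • n 0 := by
  obtain ⟨b, hb⟩ := exists_basis_eq_specX_pow (r := r) ha
  have hb_rev (k : Fin r) : b.reindex Fin.revPerm k = specX R r a ^ (r - 1 - k : ℕ) := by
    simp [hb, Nat.sub_sub, add_comm 1]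
  have top : n r = aeval (specX R r a) (specPoly R r a) • n 0 := by
    rw [hn, aeval_specX_specPoly, zero_smul]
  calc
    _ ↔ ∀ k < r, n (k + 1) = specX R r a • n k + a (k + 1) • n 0 := by
      rw [specPsi_sum_pow_rev_tmul ha hn, sum_range_basis_tmul_eq_zero_iff _ hb_rev]
      exact forall₂_congr fun k _ => sub_eq_zero.trans eq_comm
    _ ↔ ∀ k ≤ r, n k = aeval (specX R r a) (specPoly R k a) • n 0 :=
      horner_recurrence_iff ha _ n r
    _ ↔ _ := by
      simp only [Nat.le_iff_lt_or_eq, or_imp, forall_and, forall_eq, top, and_true]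

theorem specPsi_sum_pow_tmul_eq_zero_iff (hr : 1 ≤ r) (ha : a 0 = 1) (m : ℕ → M) :
    specPsi R r a M (∑ i ∈ Finset.range r, (specX R r a ^ i) ⊗ₜ[R] m i) = 0 ↔
      ∀ i < r, m i = aeval (specX R r a) (specPoly R (r - 1 - i) a) • m (r - 1) := by
  let n (k : ℕ) : M := if k < r then m (r - 1 - k) else 0
  have n_of_lt {k : ℕ} (hk : k < r) : n k = m (r - 1 - k) := if_pos hk
  have reverse : ∑ i ∈ Finset.range r, (specX R r a ^ i) ⊗ₜ[R] m i =
      ∑ k ∈ Finset.range r, (specX R r a ^ (r - 1 - k)) ⊗ₜ[R] n k := by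
    rw [← Finset.sum_range_reflect]
    exact Finset.sum_congr rfl fun k hk => by rw [n_of_lt (Finset.mem_range.1 hk)]
  have n_self : n r = 0 := if_neg (lt_irrefl r)
  rw [reverse, specPsi_sum_pow_rev_tmul_eq_zero_iff ha n_self, n_of_lt hr, Nat.sub_zero]
  refine ⟨fun h i hi => ?_, fun h k hk => ?_⟩
  · have reflect_lt : r - 1 - i < r := by lia
    rw [← h _ reflect_lt, n_of_lt reflect_lt, Nat.sub_sub_self (Nat.le_sub_one_of_lt hi)]
  · rw [n_of_lt hk, h _ (by lia), Nat.sub_sub_self (Nat.le_sub_one_of_lt hk)]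

theorem sum_specQ_coeff_eq_aeval {i : ℕ} (hi : i < r) :
    ∑ j ∈ Finset.range (r - i),
        algebraMap R (SpecS R r a) (a j) * specX R r a ^ (r - 1 - i - j) =
      aeval (specX R r a) (specPoly R (r - 1 - i) a) := by
  rw [aeval_specPoly, show r - 1 - i + 1 = r - i by lia]

omit [IsScalarTower R (SpecS R r a) M] in
theorem specQ_eq_sum_aeval (m : M) :
    specQ R r a M m = ∑ i ∈ Finset.range r,
      (specX R r a ^ i) ⊗ₜ[R] (aeval (specX R r a) (specPoly R (r - 1 - i) a) • m) :=
  Finset.sum_congr rfl fun i hi => by rw [sum_specQ_coeff_eq_aeval (Finset.mem_range.1 hi)]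

theorem specPsi_specQ (hr : 1 ≤ r) (ha : a 0 = 1) (m : M) :
    specPsi R r a M (specQ R r a M m) = 0 := by
  rw [specQ_eq_sum_aeval, specPsi_sum_pow_tmul_eq_zero_iff hr ha]
  intro i _
  rw [Nat.sub_self, specPoly_zero ha, map_one, one_smul]

theorem sum_pow_tmul_eq_specQ_of_specPsi_eq_zero (hr : 1 ≤ r) (ha : a 0 = 1) {m : ℕ → M}
    (hm : specPsi R r a M (∑ i ∈ Finset.range r, (specX R r a ^ i) ⊗ₜ[R] m i) = 0) :
    ∑ i ∈ Finset.range r, (specX R r a ^ i) ⊗ₜ[R] m i = specQ R r a M (m (r - 1)) := by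
  rw [specQ_eq_sum_aeval]
  exact Finset.sum_congr rfl fun i hi => congrArg _
    ((specPsi_sum_pow_tmul_eq_zero_iff hr ha m).1 hm i (Finset.mem_range.1 hi))

end Kernel

/-- The kernel of `Ψ` equals the image of `Q`; more precisely, if
`z = ∑_{i<r} x^i ⊗ m_i` satisfies `Ψ(z) = 0` then, with `m = m_{r−1}`, one has
`m_i = (∑_{j≤r−1−i} a_j x^{r−1−i−j}) • m` for every `i < r`, and hence `z = Q(m)`. -/
theorem statement_4 (hr : 1 ≤ r) (ha : a 0 = 1) :
    ({z : SpecS R r a ⊗[R] M | specPsi R r a M z = 0} = Set.range (specQ R r a M)) ∧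
    (∀ m : ℕ → M,
      specPsi R r a M (∑ i ∈ Finset.range r, ((specX R r a) ^ i) ⊗ₜ[R] m i) = 0 →
      (∀ i ∈ Finset.range r,
          m i = (∑ j ∈ Finset.range (r - i),
              algebraMap R (SpecS R r a) (a j) * (specX R r a) ^ (r - 1 - i - j)) • m (r - 1)) ∧
      (∑ i ∈ Finset.range r, ((specX R r a) ^ i) ⊗ₜ[R] m i) = specQ R r a M (m (r - 1))) := by
  refine ⟨Set.Subset.antisymm ?_ ?_, fun m hm =>
    ⟨fun i hi => ?_, sum_pow_tmul_eq_specQ_of_specPsi_eq_zero hr ha hm⟩⟩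
  · intro z hz
    obtain ⟨b, hb⟩ := exists_basis_eq_specX_pow (r := r) ha
    obtain ⟨m, rfl⟩ := exists_eq_sum_range_basis_tmul b hb z
    exact ⟨m (r - 1), (sum_pow_tmul_eq_specQ_of_specPsi_eq_zero hr ha hz).symm⟩
  · rintro _ ⟨m, rfl⟩
    exact specPsi_specQ hr ha m
  · have hi := Finset.mem_range.1 hi
    rw [sum_specQ_coeff_eq_aeval hi]
    exact (specPsi_sum_pow_tmul_eq_zero_iff hr ha m).1 hm i hi
end
end
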